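/- Let U ⊆ ℝ^m be a connected and simply connected open set. Let P_1,…,P_m : U → ℝ^{m×m} be smooth with each P_k(q) skew-symmetric, and let g_1,…,g_m, h_1,…,h_m : U → ℝ^m be smooth. Assume for all k, l ∈ {1,…,m} on U: (i) ∂_k g_l − ∂_l g_k = P_l g_k − P_k g_l; (ii) ∂_k h_l − ∂_l h_k = P_l h_k − P_k h_l; (iii) ⟨g_k, h_l⟩ = ⟨g_l, h_k⟩; (iv) ∂_k P_l − ∂_l P_k = P_l P_k − P_k P_l + g_k g_lᵀ − g_l g_kᵀ + h_k h_lᵀ − h_l h_kᵀ. Define Ã_k : U → ℝ^{(m+2)×(m+2)} (indices 0, 1,…,m, m+1) as the block matrix with (0,0)-entry 0, first row block −g_kᵀ (columns 1..m), first column block g_k (rows 1..m), middle m×m block P_k, −h_k in rows 1..m of column m+1, h_kᵀ in columns 1..m of row m+1, and all remaining entries 0. Then there exists a smooth F : U → SO(m+2) with ∂_k F = F Ã_k on U for all k. Moreover, f := (column 0 of F) maps U into the unit sphere S^{m+1} ⊂ ℝ^{m+2}, ν := (column m+1 of F) satisfies ⟨ν, ν⟩ = 1, ⟨f, ν⟩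 = 0, ⟨∂_k f, ν⟩ = 0, so (f, ν) is a frontal in S^{m+1}, and ⟨∂_k f, ∂_l f⟩ = ⟨g_k, g_l⟩, ⟨∂_k f, ∂_l ν⟩ = −⟨g_k, h_l⟩, ⟨∂_k ν, ∂_l ν⟩ = ⟨h_k, h_l⟩ on U. -/

import Mathlib

open scoped Matrix

noncomputable section

/-- Partial derivative of a vector-valued map in the `k`-th coordinate direction. -/
def pd {m N : ℕ} (k : Fin m) (f : (Fin m → ℝ) → (Fin N → ℝ)) :
    (Fin m → ℝ) → (Fin N → ℝ) :=
  fun q => fderiv ℝ f q (Pi.single k 1)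

/-- Partial derivative of a scalar function in the `k`-th coordinate direction. -/
def pdr {m : ℕ} (k : Fin m) (g : (Fin m → ℝ) → ℝ) : (Fin m → ℝ) → ℝ :=
  fun q => fderiv ℝ g q (Pi.single k 1)

/-- Entrywise partial derivative of a matrix-valued map. -/
def pdM {m N : ℕ} (k : Fin m) (A : (Fin m → ℝ) → Matrix (Fin N) (Fin N) ℝ) :
    (Fin m → ℝ) → Matrix (Fin N) (Fin N) ℝ :=
  fun q => Matrix.of fun i j => pdr k (fun x => A x i j) q

/-- The block matrix `Ã` of the spherical structure equations (indices `0, 1, …, m, m+1`):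
`(0,0)`-entry `0`, first row `(0, -gᵀ, 0)`, first column `(0, g, 0)ᵀ`, middle `m×m`
block `P`, `-h` in rows `1..m` of the last column, `hᵀ` in columns `1..m` of the last row. -/
def tildeA {m : ℕ} (P : Matrix (Fin m) (Fin m) ℝ) (g h : Fin m → ℝ) :
    Matrix (Fin (m + 2)) (Fin (m + 2)) ℝ :=
  Matrix.of fun i j =>
    if hi0 : (i : ℕ) = 0 then
      (if hj : 1 ≤ (j : ℕ) ∧ (j : ℕ) ≤ m then -g ⟨(j : ℕ) - 1, by omega⟩ else 0)
    else if him : (i : ℕ) = m + 1 then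
      (if hj : 1 ≤ (j : ℕ) ∧ (j : ℕ) ≤ m then h ⟨(j : ℕ) - 1, by omega⟩ else 0)
    else
      if hj0 : (j : ℕ) = 0 then g ⟨(i : ℕ) - 1, by have := i.isLt; omega⟩
      else if hjm : (j : ℕ) = m + 1 then -h ⟨(i : ℕ) - 1, by have := i.isLt; omega⟩
      else P ⟨(i : ℕ) - 1, by have := i.isLt; omega⟩ ⟨(j : ℕ) - 1, by have := j.isLt; omega⟩


theorem local_frame_quant {E M : Type*} [NormedAddCommGroup E] [NormedSpace ℝ E]
    [NormedRing M] [NormedAlgebra ℝ M] [CompleteSpace M]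
    (ω : E → E →L[ℝ] M) (ω' : E → E →L[ℝ] E →L[ℝ] M) (p : E) (r C D K : ℝ)
    (hr : 0 < r) (hCr : C * r ≤ 1 / 2) (hC0 : 0 ≤ C) (hD0 : 0 ≤ D) (hK0 : 0 ≤ K)
    (hd : ∀ y ∈ Metric.ball p r, HasFDerivAt ω (ω' y) y)
    (hC : ∀ y ∈ Metric.ball p r, ‖ω y‖ ≤ C)
    (hD : ∀ y ∈ Metric.ball p r, ‖ω' y‖ ≤ D)
    (hK : ∀ y ∈ Metric.ball p r, ∀ z ∈ Metric.ball p r, ‖ω' y - ω' z‖ ≤ K * ‖y - z‖)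
    (hflat : ∀ y ∈ Metric.ball p r, ∀ u v,
      ω' y u v - ω' y v u = ω y v * ω y u - ω y u * ω y v) :
    ∃ Φ : E → M, Φ p = 1 ∧ ∀ x ∈ Metric.ball p r,
      HasFDerivAt Φ ((ContinuousLinearMap.mul ℝ M (Φ x)).comp (ω x)) x := by
  classical
  have hseg : ∀ v : E, ‖v‖ < r → ∀ t ∈ Set.Icc (0:ℝ) 1, p + t • v ∈ Metric.ball p r := by
    intro v hv t ht
    rw [mem_ball_iff_norm, add_sub_cancel_left, norm_smul, Real.norm_eq_abs, abs_of_nonneg ht.1]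
    nlinarith [norm_nonneg v, ht.1, ht.2]
  have hωv : ∀ v : E, ‖v‖ < r → ∀ t ∈ Set.Icc (0:ℝ) 1, ‖ω (p + t • v) v‖ ≤ 1 / 2 := by
    intro v hv t ht
    calc ‖ω (p + t • v) v‖ ≤ ‖ω (p + t • v)‖ * ‖v‖ := ContinuousLinearMap.le_opNorm _ _
      _ ≤ C * r := mul_le_mul (hC _ (hseg v hv t ht)) hv.le (norm_nonneg _) hC0
      _ ≤ _ := hCr
  have hωd : ∀ v : E, ‖v‖ < r → ∀ u, ∀ t ∈ Set.Icc (0:ℝ) 1,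
      HasDerivAt (fun s : ℝ => ω (p + s • v) u) (ω' (p + t • v) v u) t := by
    intro v hv u t ht
    have h1 : HasDerivAt (fun s : ℝ => p + s • v) v t := by
      simpa using ((hasDerivAt_id t).smul_const v).const_add p
    have h2 := (hd _ (hseg v hv t ht)).comp_hasDerivAt t h1
    exact ((ContinuousLinearMap.apply ℝ M u).hasFDerivAt.comp_hasDerivAt t h2)
  have hlip : ∀ w : M, ‖w‖ ≤ 1 / 2 → LipschitzWith (1/2 : NNReal) (fun y : M => y * w) := by
    intro w hw
    apply LipschitzWith.of_dist_le_mul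
    intro a b
    rw [dist_eq_norm, dist_eq_norm, ← sub_mul]
    calc ‖(a - b) * w‖ ≤ ‖a - b‖ * ‖w‖ := norm_mul_le _ _
      _ ≤ ‖a - b‖ * (1/2) := by gcongr
      _ = _ := by push_cast; ring
  have hex : ∀ v : E, ‖v‖ < r → ∃ α : ℝ → M, α 0 = 1 ∧ ∀ t ∈ Set.Icc (0:ℝ) 1,
      HasDerivWithinAt α (α t * ω (p + t • v) v) (Set.Icc (0:ℝ) 1) t := by
    intro v hv
    have hpl : IsPicardLindelof (fun t (y : M) => y * ω (p + t • v) v)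
        (tmin := 0) (tmax := 1) ⟨0, by simp⟩ (1 : M) ‖(1:M)‖₊ 0 ‖(1:M)‖₊ (1/2) := by
      constructor
      · intro t ht
        exact (hlip _ (hωv v hv t ht)).lipschitzOnWith
      · intro x hx t ht
        exact ((hωd v hv v t ht).continuousAt.const_mul x).continuousWithinAt
      · intro t ht x hx
        have h1 : ‖x‖ ≤ 2 * ‖(1:M)‖ := by
          have := mem_closedBall_iff_norm.1 hx
          have h3 := norm_add_le (x - 1) 1
          rw [sub_add_cancel] at h3
          simp only [coe_nnnorm] at this
          linarith
        calc ‖x * ω (p + t • v) v‖ ≤ ‖x‖ * ‖ω (p + t • v) v‖ := norm_mul_le _ _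
          _ ≤ (2 * ‖(1:M)‖) * (1/2) := mul_le_mul h1 (hωv v hv t ht) (norm_nonneg _) (by positivity)
          _ = _ := by rw [coe_nnnorm]; ring
      · simp
    obtain ⟨α, h0, h1⟩ := hpl.exists_eq_forall_mem_Icc_hasDerivWithinAt₀
    exact ⟨α, h0, h1⟩
  choose! α hα0 hα using hex
  refine ⟨fun y => α (y - p) 1, ?_, ?_⟩
  · skip
    have h1 := hα 0 (by simpa using hr)
    have h2 : ∀ t ∈ Set.Icc (0:ℝ) 1, α 0 t = α 0 0 := by
      apply constant_of_has_deriv_right_zero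
      · intro t ht; exact (h1 t ht).continuousWithinAt
      · intro t ht
        have := h1 t ⟨ht.1, ht.2.le⟩
        simp only [map_zero, mul_zero] at this
        exact this.mono_of_mem_nhdsWithin (Icc_mem_nhdsGE_of_mem ht)
    simp only [sub_self]
    rw [h2 1 (by simp), hα0 0 (by simpa using hr)]
  · intro x hx
    set v := x - p with hv
    have hvr : ‖v‖ < r := mem_ball_iff_norm.1 hx
    have hαc : ContinuousOn (α v) (Set.Icc 0 1) := fun t ht => (hα v hvr t ht).continuousWithinAt
    obtain ⟨A, hA⟩ := isCompact_Icc.exists_bound_of_continuousOn hαc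
    have hA0 : 0 ≤ A := (norm_nonneg _).trans (hA 0 (by simp))
    set B := A * (D + K * r + C * (D * r + C)) with hB
    have hB0 : 0 ≤ B := by positivity
    have key : ∀ h : E, ‖v + h‖ < r →
        ‖α (v + h) 1 - (α v 1 + α v 1 * ω x h)‖ ≤ (B * (2 * (Real.exp (1/2) - 1))) * ‖h‖ ^ 2 := by
      intro h hh
      have hZ : ∀ t ∈ Set.Icc (0:ℝ) 1, HasDerivWithinAt
          (fun t => α v t * (1 + t • ω (p + t • v) h))
          ((α v t * ω (p + t • v) v) * (1 + t • ω (p + t • v) h) +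
            α v t * (ω (p + t • v) h + t • ω' (p + t • v) v h)) (Set.Icc 0 1) t := by
        intro t ht
        have h1 : HasDerivAt (fun t : ℝ => (1 : M) + t • ω (p + t • v) h)
            (ω (p + t • v) h + t • ω' (p + t • v) v h) t := by
          have := ((hasDerivAt_id t).smul (hωd v hvr h t ht)).const_add (1 : M)
          convert! this using 1
          simp [add_comm]
        exact (hα v hvr t ht).mul h1.hasDerivWithinAt
      have hg := dist_le_of_approx_trajectories_ODE_of_mem (a := 0) (b := 1)
        (v := fun t (y : M) => y * ω (p + t • (v + h)) (v + h)) (s := fun _ => Set.univ)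
        (K := 1/2) (f := α (v + h)) (g := fun t => α v t * (1 + t • ω (p + t • v) h))
        (f' := fun t => α (v + h) t * ω (p + t • (v + h)) (v + h))
        (g' := fun t => ((α v t * ω (p + t • v) v) * (1 + t • ω (p + t • v) h) +
            α v t * (ω (p + t • v) h + t • ω' (p + t • v) v h)))
        (εf := 0) (εg := B * ‖h‖ ^ 2) (δ := 0)
        (fun t ht => (hlip _ (hωv _ hh t ⟨ht.1, ht.2.le⟩)).lipschitzOnWith)
        (fun t ht => (hα _ hh t ht).continuousWithinAt)
        (fun t ht => (hα _ hh t ⟨ht.1, ht.2.le⟩).mono_of_mem_nhdsWithin (Icc_mem_nhdsGE_of_mem ht))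
        (fun t ht => by simp)
        (fun t ht => trivial)
        (fun t ht => (hZ t ht).continuousWithinAt)
        (fun t ht => (hZ t ⟨ht.1, ht.2.le⟩).mono_of_mem_nhdsWithin (Icc_mem_nhdsGE_of_mem ht))
        ?_ (fun t ht => trivial) (by simp [hα0 _ hvr, hα0 _ hh]) 1 (by simp)
      · rw [gronwallBound_of_K_ne_0 (by norm_num)] at hg
        rw [dist_eq_norm] at hg
        have e1 : p + (1:ℝ) • v = x := by simp [hv]
        simp only [e1] at hg
        rw [one_smul, mul_add, mul_one] at hg
        refine hg.trans (le_of_eq ?_)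
        simp
        ring
      · intro t ht'
        have ht : t ∈ Set.Icc (0:ℝ) 1 := ⟨ht'.1, ht'.2.le⟩
        have hy := hseg v hvr t ht
        have hz := hseg _ hh t ht
        have hyz : (p + t • (v + h)) - (p + t • v) = t • h := by rw [smul_add]; abel
        have hth : ‖t • h‖ ≤ ‖h‖ := by
          rw [norm_smul, Real.norm_eq_abs, abs_of_nonneg ht.1]
          nlinarith [norm_nonneg h, ht.2]
        have hW1 : ‖ω (p + t • (v + h)) - ω (p + t • v)‖ ≤ D * ‖h‖ := by
          have := (convex_ball p r).norm_image_sub_le_of_norm_hasFDerivWithin_le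
            (fun y hy => (hd y hy).hasFDerivWithinAt) hD hy hz
          rw [hyz] at this
          exact this.trans (by gcongr)
        have hsegm : segment ℝ (p + t • v) (p + t • (v + h)) ⊆ Metric.ball p r :=
          (convex_ball p r).segment_subset hy hz
        have hW2 : ‖ω (p + t • (v + h)) - ω (p + t • v) - ω' (p + t • v) (t • h)‖
            ≤ K * ‖h‖ * ‖h‖ := by
          have := (convex_segment (p + t • v) (p + t • (v + h))).norm_image_sub_le_of_norm_hasFDerivWithin_le'
            (f := ω) (f' := ω') (φ := ω' (p + t • v)) (C := K * ‖h‖)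
            (fun y hy => (hd y (hsegm hy)).hasFDerivWithinAt) ?_
            (left_mem_segment _ _ _) (right_mem_segment _ _ _)
          · rw [hyz] at this
            exact this.trans (by gcongr)
          · intro y hy'
            refine (hK y (hsegm hy') _ hy).trans ?_
            have := norm_sub_le_of_mem_segment hy'
            rw [hyz] at this
            gcongr
            exact this.trans hth
        have hfl := hflat _ hy h v
        have hOb := hC _ hy
        have hO'b := hD _ hy
        have hab := hA t ht
        generalize ω (p + t • (v + h)) = W at *
        generalize ω (p + t • v) = O at *
        generalize ω' (p + t • v) = O' at *
        generalize α v t = a at *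
        have hid : a * O v * (1 + t • O h) + a * (O h + t • O' v h)
            - a * (1 + t • O h) * W (v + h)
            = - (a * (t • O' h h + (W - O - O' (t • h)) (v + h)
              + t • (O h * ((W - O) (v + h) + O h)))) := by
          have e : O' h v = O' v h + (O v * O h - O h * O v) := by rw [← hfl]; abel
          simp only [sub_apply, map_add, map_smul,
            smul_apply, e, smul_add, smul_sub, mul_add, add_mul, mul_sub,
            mul_one, mul_smul_comm, smul_mul_assoc, mul_assoc]
          abel
        rw [dist_eq_norm, hid, norm_neg, hB]
        have ht1 : ‖t‖ ≤ 1 := by rw [Real.norm_eq_abs, abs_of_nonneg ht.1]; exact ht.2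
        have b1 : ‖t • O' h h‖ ≤ D * ‖h‖ * ‖h‖ := by
          rw [norm_smul]
          calc ‖t‖ * ‖O' h h‖ ≤ 1 * (‖O'‖ * ‖h‖ * ‖h‖) := by
                gcongr
                exact O'.le_opNorm₂ h h
            _ ≤ _ := by rw [one_mul]; gcongr
        have b2 : ‖(W - O - O' (t • h)) (v + h)‖ ≤ (K * ‖h‖ * ‖h‖) * r :=
          (ContinuousLinearMap.le_opNorm _ _).trans (by gcongr)
        have b3 : ‖(W - O) (v + h)‖ ≤ (D * ‖h‖) * r :=
          (ContinuousLinearMap.le_opNorm _ _).trans (by gcongr)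
        have b4 : ‖O h‖ ≤ C * ‖h‖ :=
          (ContinuousLinearMap.le_opNorm _ _).trans (by gcongr)
        have b5 : ‖t • (O h * ((W - O) (v + h) + O h))‖
            ≤ (C * ‖h‖) * ((D * ‖h‖) * r + C * ‖h‖) := by
          rw [norm_smul]
          calc _ ≤ 1 * (‖O h‖ * ‖(W - O) (v + h) + O h‖) := by
                gcongr
                exact norm_mul_le _ _
            _ ≤ _ := by
                rw [one_mul]
                gcongr
                exact (norm_add_le _ _).trans (by gcongr)
        calc _ ≤ ‖a‖ * ‖(t • O' h h + (W - O - O' (t • h)) (v + h)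
              + t • (O h * ((W - O) (v + h) + O h)))‖ := norm_mul_le _ _
          _ ≤ A * (D * ‖h‖ * ‖h‖ + (K * ‖h‖ * ‖h‖) * r
              + (C * ‖h‖) * ((D * ‖h‖) * r + C * ‖h‖)) := by
              gcongr
              exact (norm_add₃_le).trans (by gcongr)
          _ = _ := by ring
    have hO : (fun y => α (y - p) 1 - (α v 1 + α v 1 * ω x (y - x))) =O[nhds x]
        fun y => ‖y - x‖ ^ 2 := by
      apply Asymptotics.IsBigO.of_bound (B * (2 * (Real.exp (1/2) - 1)))
      filter_upwards [Metric.isOpen_ball.mem_nhds hx] with y hy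
      have e : v + (y - x) = y - p := by rw [hv]; abel
      have := key (y - x) (by rw [e]; exact mem_ball_iff_norm.1 hy)
      rw [e] at this
      simpa using this
    have hz := hO.hasFDerivAt (𝕜 := ℝ) (by norm_num)
    have hlin : HasFDerivAt (fun y => α v 1 + α v 1 * ω x (y - x))
        ((ContinuousLinearMap.mul ℝ M (α v 1)).comp (ω x)) x := by
      have h1 : HasFDerivAt (fun y : E => y - x) (ContinuousLinearMap.id ℝ E) x :=
        (hasFDerivAt_id x).sub_const x
      exact ((((ContinuousLinearMap.mul ℝ M (α v 1)).comp (ω x)).hasFDerivAt).comp x h1).const_add _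
    have := hz.add hlin
    rw [zero_add] at this
    refine this.congr_of_eventuallyEq (Filter.Eventually.of_forall fun y => ?_)
    simp

theorem local_frame {E M : Type*} [NormedAddCommGroup E] [NormedSpace ℝ E]
    [NormedRing M] [NormedAlgebra ℝ M] [CompleteSpace M]
    (U : Set E) (hU : IsOpen U) (ω : E → E →L[ℝ] M) (hω : ContDiffOn ℝ (⊤ : ℕ∞) ω U)
    (hflat : ∀ y ∈ U, ∀ u v,
      fderiv ℝ ω y u v - fderiv ℝ ω y v u = ω y v * ω y u - ω y u * ω y v)
    (p : E) (hp : p ∈ U) :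
    ∃ r > 0, Metric.ball p r ⊆ U ∧ ∃ Φ : E → M, Φ p = 1 ∧ ∀ x ∈ Metric.ball p r,
      HasFDerivAt Φ ((ContinuousLinearMap.mul ℝ M (Φ x)).comp (ω x)) x := by
  have hc : ContDiffAt ℝ (⊤ : ℕ∞) ω p := hω.contDiffAt (hU.mem_nhds hp)
  have hf : ContDiffAt ℝ 1 (fderiv ℝ ω) p :=
    hc.fderiv_right (m := 1) (by
      exact WithTop.coe_le_coe.2 (le_top (a := ((1 + 1 : ℕ∞)))))
  obtain ⟨K, t, ht, hK⟩ := hf.exists_lipschitzOnWith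
  have h1 : ∀ᶠ y in nhds p, ‖ω y‖ < ‖ω p‖ + 1 :=
    hc.continuousAt.norm.eventually (gt_mem_nhds (by linarith))
  have h2 : ∀ᶠ y in nhds p, ‖fderiv ℝ ω y‖ < ‖fderiv ℝ ω p‖ + 1 := by
    filter_upwards [hf.continuousAt.eventually (Metric.ball_mem_nhds _ one_pos)] with y hy
    have h3 := mem_ball_iff_norm.1 hy
    have h4 := norm_le_norm_add_norm_sub' (fderiv ℝ ω y) (fderiv ℝ ω p)
    linarith
  obtain ⟨r, hr, hball⟩ := Metric.eventually_nhds_iff_ball.1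
    (((h1.and h2).and (hU.mem_nhds hp)).and ht)
  have hC1 : 0 < ‖ω p‖ + 1 := by positivity
  set r' := min r (1 / (2 * (‖ω p‖ + 1))) with hr'
  have hr'0 : 0 < r' := lt_min hr (by positivity)
  have hsub : ∀ y ∈ Metric.ball p r', y ∈ Metric.ball p r :=
    fun y hy => Metric.ball_subset_ball (min_le_left _ _) hy
  refine ⟨r', hr'0, fun y hy => (hball y (hsub y hy)).1.2, ?_⟩
  refine local_frame_quant ω (fderiv ℝ ω) p r' (‖ω p‖ + 1) (‖fderiv ℝ ω p‖ + 1) K hr'0 ?_ hC1.le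
    (by positivity) K.2 ?_ ?_ ?_ ?_ ?_
  · calc (‖ω p‖ + 1) * r' ≤ (‖ω p‖ + 1) * (1 / (2 * (‖ω p‖ + 1))) := by
          gcongr; exact min_le_right _ _
      _ = 1 / 2 := by field_simp
  · intro y hy
    have hyU := (hball y (hsub y hy)).1.2
    exact ((hω.contDiffAt (hU.mem_nhds hyU)).differentiableAt (by simp)).hasFDerivAt
  · intro y hy; exact (hball y (hsub y hy)).1.1.1.le
  · intro y hy; exact (hball y (hsub y hy)).1.1.2.le
  · intro y hy z hz
    have := hK.dist_le_mul y (hball y (hsub y hy)).2 z (hball z (hsub z hz)).2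
    simpa [dist_eq_norm] using this
  · intro y hy; exact hflat y (hball y (hsub y hy)).1.2

section GlobalFrame

/-- A type with the discrete topology. -/
def Discr (M : Type*) : Type _ := M

instance instTopDiscr (M : Type*) : TopologicalSpace (Discr M) := ⊥

instance instDiscDiscr (M : Type*) : DiscreteTopology (Discr M) := ⟨rfl⟩

/-- `F` solves `dF = F ω` at `x`. -/
def SolvesAt {E M : Type*} [NormedAddCommGroup E] [NormedSpace ℝ E]
    [NormedRing M] [NormedAlgebra ℝ M]
    (ω : E → E →L[ℝ] M) (F : E → M) (x : E) : Prop :=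
  HasFDerivAt F ((ContinuousLinearMap.mul ℝ M (F x)).comp (ω x)) x

theorem hasFDerivAt_mul_transpose {E M : Type*} [NormedAddCommGroup E] [NormedSpace ℝ E]
    [NormedRing M] [NormedAlgebra ℝ M] (T : M →L[ℝ] M) (hT : ∀ a b, T (a * b) = T b * T a)
    {ω : E → E →L[ℝ] M} {F G : E → M} {x : E}
    (hskew : ∀ u, T (ω x u) = -(ω x u)) (hF : SolvesAt ω F x) (hG : SolvesAt ω G x) :
    HasFDerivAt (fun y => F y * T (G y)) (0 : E →L[ℝ] M) x := by
  have h1 : HasFDerivAt (fun y => T (G y)) _ x := T.hasFDerivAt.comp x hG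
  have h2 := HasFDerivAt.mul' hF h1
  convert! h2 using 1
  ext1 u
  simp [hT, hskew, mul_assoc]

theorem global_frame {E M : Type*} [NormedAddCommGroup E] [NormedSpace ℝ E]
    [NormedRing M] [NormedAlgebra ℝ M] [CompleteSpace M] [IsDedekindFiniteMonoid M]
    (T : M →L[ℝ] M) (hT : ∀ a b, T (a * b) = T b * T a) (hT1 : T 1 = 1)
    (U : Set E) (hU : IsOpen U) (hconn : IsConnected U) (hsc : SimplyConnectedSpace U)
    (ω : E → E →L[ℝ] M) (hω : ContDiffOn ℝ (⊤ : ℕ∞) ω U)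
    (hflat : ∀ y ∈ U, ∀ u v,
      fderiv ℝ ω y u v - fderiv ℝ ω y v u = ω y v * ω y u - ω y u * ω y v)
    (hskew : ∀ y ∈ U, ∀ u, (T (ω y u)) = -(ω y u)) (p₀ : E) (hp₀ : p₀ ∈ U) :
    ∃ F : E → M, F p₀ = 1 ∧ (∀ x ∈ U, SolvesAt ω F x) ∧
      ∀ x ∈ U, F x * (T (F x)) = 1 := by
  classical
  have hloc := fun p : U => local_frame U hU ω hω hflat p.1 p.2
  choose r hr hball Φ hΦ1 hΦ using hloc
  have hΦ' : ∀ i : U, ∀ x ∈ Metric.ball (i : E) (r i), SolvesAt ω (Φ i) x := hΦ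
  have hconst : ∀ i j : U, ∀ x ∈ Metric.ball (i : E) (r i) ∩ Metric.ball (j : E) (r j),
      ∀ y ∈ Metric.ball (i : E) (r i) ∩ Metric.ball (j : E) (r j),
      Φ i x * (T (Φ j x)) = Φ i y * (T (Φ j y)) := by
    intro i j x hx y hy
    have hd : ∀ z ∈ Metric.ball (i : E) (r i) ∩ Metric.ball (j : E) (r j),
      HasFDerivAt (fun y => Φ i y * (T (Φ j y))) (0 : E →L[ℝ] M) z :=
      fun z hz => hasFDerivAt_mul_transpose T hT (hskew z (hball i hz.1)) (hΦ' i z hz.1) (hΦ' j z hz.2)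
    exact (Metric.isOpen_ball.inter Metric.isOpen_ball).is_const_of_fderiv_eq_zero
      ((convex_ball _ _).inter (convex_ball _ _)).isPreconnected
      (fun z hz => (hd z hz).differentiableAt.differentiableWithinAt)
      (fun z hz => (hd z hz).fderiv) hx hy
  have hmemc : ∀ i : U, (i : E) ∈ Metric.ball (i : E) (r i) :=
    fun i => Metric.mem_ball_self (hr i)
  have horth : ∀ i : U, ∀ x ∈ Metric.ball (i : E) (r i), Φ i x * (T (Φ i x)) = 1 := by
    intro i x hx
    rw [hconst i i x ⟨hx, hx⟩ i ⟨hmemc i, hmemc i⟩, hΦ1]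
    simp [hT1]
  have horth' : ∀ i : U, ∀ x ∈ Metric.ball (i : E) (r i), (T (Φ i x)) * Φ i x = 1 :=
    fun i x hx => mul_eq_one_comm.1 (horth i x hx)
  let Z : FiberBundleCore U U (Discr M) :=
    { baseSet := fun i => {x : U | (x : E) ∈ Metric.ball (i : E) (r i)}
      isOpen_baseSet := fun i => Metric.isOpen_ball.preimage continuous_subtype_val
      indexAt := id
      mem_baseSet_at := fun x => hmemc x
      coordChange := fun i j x (v : M) => v * (Φ i x * (T (Φ j x)))
      coordChange_self := by
        intro i x hx v
        rw [horth i x hx]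
        exact mul_one (M := M) v
      continuousOn_coordChange := by
        intro i j
        by_cases hne : ∃ y : U, (y : E) ∈ Metric.ball (i : E) (r i) ∩ Metric.ball (j : E) (r j)
        · obtain ⟨y, hy⟩ := hne
          let c : Discr M → Discr M :=
            fun (v : M) => v * (Φ i y * (T (Φ j y)))
          have hc : Continuous c := continuous_of_discreteTopology
          refine (hc.comp continuous_snd).continuousOn.congr ?_
          rintro ⟨x, v⟩ ⟨hx, -⟩
          simp only [Function.comp, c]
          rw [hconst i j x hx y hy]
        · rintro ⟨x, v⟩ ⟨hx, -⟩
          exact absurd ⟨x, hx⟩ hne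
      coordChange_comp := by
        rintro i j k x ⟨⟨hi, hj⟩, hk⟩ v
        have : (Φ i x * (T (Φ j x))) * (Φ j x * (T (Φ k x))) = Φ i x * (T (Φ k x)) := by
          rw [mul_assoc, ← mul_assoc (T (Φ j x)), horth' j x hj, one_mul]
        rw [mul_assoc (G := M) v, this] }
  have hcov : IsCoveringMap Z.proj := FiberBundle.isCoveringMap (F := Discr M) (E := Z.Fiber)
  have : LocallyPathConnectedSpace U := hU.locallyPathConnectedSpace
  let e₀ : Z.TotalSpace := ⟨⟨p₀, hp₀⟩, (1 : M)⟩
  obtain ⟨G, ⟨hG0, hGp⟩, -⟩ := hcov.existsUnique_continuousMap_lifts (ContinuousMap.id U)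
    ⟨p₀, hp₀⟩ e₀ rfl
  have hGp' : ∀ x : U, (G x).1 = x := fun x => congrFun hGp x
  let S : U → M := fun x => (G x).2
  have hS : ∀ x₀ : U, ∀ᶠ x : U in nhds x₀, S x = S x₀ * Φ x₀ x := by
    intro x₀
    have hsrc : G x₀ ∈ (Z.localTriv x₀).source := by
      rw [FiberBundleCore.mem_localTriv_source, hGp' x₀]
      exact hmemc x₀
    have h1 : ContinuousAt (fun x => (Z.localTriv x₀ (G x)).2) x₀ :=
      continuous_snd.continuousAt.comp
        (((Z.localTriv x₀).continuousAt hsrc).comp G.continuous.continuousAt)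
    have h2 : ∀ᶠ x : U in nhds x₀, (Z.localTriv x₀ (G x)).2 = (Z.localTriv x₀ (G x₀)).2 :=
      h1.eventually (p := fun w => w = (Z.localTriv x₀ (G x₀)).2) (by rw [nhds_discrete]; exact rfl)
    have hval : ∀ x : U, (Z.localTriv x₀ (G x)).2 = S x * (T (Φ x₀ x)) := by
      intro x
      have : (Z.localTriv x₀ (G x)).2 = S x * (Φ (G x).1 ((G x).1 : E) * (T (Φ x₀ ((G x).1 : E)))) := rfl
      rw [this, hΦ1, one_mul, hGp' x]
    have h3 : ∀ᶠ x : U in nhds x₀, (x : E) ∈ Metric.ball (x₀ : E) (r x₀) :=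
      (Metric.isOpen_ball.preimage continuous_subtype_val).mem_nhds (hmemc x₀)
    filter_upwards [h2, h3] with x hx hx3
    have hx' : S x * (T (Φ x₀ x)) = S x₀ * (T (Φ x₀ x₀)) := by
      rw [← hval, ← hval]; exact hx
    rw [hΦ1, hT1, mul_one] at hx'
    rw [← hx', mul_assoc, horth' x₀ x hx3, mul_one]
  let F : E → M := fun x => if h : x ∈ U then S ⟨x, h⟩ else 0
  have hFS : ∀ x : U, F x = S x := fun x => by simp [F]
  have hF0 : F p₀ = 1 := by
    rw [hFS ⟨p₀, hp₀⟩]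
    have : S ⟨p₀, hp₀⟩ = (G ⟨p₀, hp₀⟩).2 := rfl
    have h2 : ∀ w : Z.TotalSpace, w = e₀ → (id w.2 : M) = (1 : M) := by
      rintro w rfl; rfl
    exact h2 _ hG0
  have hFsol : ∀ x ∈ U, SolvesAt ω F x := by
    intro x hx
    have h1 : ∀ᶠ y in nhds x, F y = F x * Φ ⟨x, hx⟩ y := by
      have h := hS ⟨x, hx⟩
      have hm := hU.isOpenEmbedding_subtypeVal.map_nhds_eq ⟨x, hx⟩
      rw [← hm, Filter.eventually_map]
      filter_upwards [h] with y hy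
      rw [hFS y, hy, ← hFS ⟨x, hx⟩]
    have h2 := (hΦ ⟨x, hx⟩ x (hmemc ⟨x, hx⟩))
    have h3 : HasFDerivAt (fun y => F x * Φ ⟨x, hx⟩ y) _ x :=
      (ContinuousLinearMap.mul ℝ M (F x)).hasFDerivAt.comp x h2
    unfold SolvesAt
    convert! h3.congr_of_eventuallyEq h1 using 1
    ext1 u
    have h4 : Φ ⟨x, hx⟩ x = 1 := hΦ1 ⟨x, hx⟩
    simp [h4]
  refine ⟨F, hF0, hFsol, ?_⟩
  intro x hx
  have hd : ∀ z ∈ U, HasFDerivAt (fun y => F y * (T (F y)))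
      (0 : E →L[ℝ] M) z :=
    fun z hz => hasFDerivAt_mul_transpose T hT (hskew z hz) (hFsol z hz) (hFsol z hz)
  have := hU.is_const_of_fderiv_eq_zero hconn.isPreconnected
      (fun z hz => (hd z hz).differentiableAt.differentiableWithinAt)
      (fun z hz => (hd z hz).fderiv) hx hp₀
  rw [this, hF0]
  simp [hT1]

theorem solves_contDiffOn {E M : Type*} [NormedAddCommGroup E] [NormedSpace ℝ E]
    [NormedRing M] [NormedAlgebra ℝ M]
    (U : Set E) (hU : IsOpen U)
    (ω : E → E →L[ℝ] M) (hω : ContDiffOn ℝ (⊤ : ℕ∞) ω U)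
    (F : E → M) (hF : ∀ x ∈ U, SolvesAt ω F x) :
    ContDiffOn ℝ (⊤ : ℕ∞) F U := by
  have hdiff : DifferentiableOn ℝ F U :=
    fun x hx => (hF x hx).differentiableAt.differentiableWithinAt
  have key : ∀ k : ℕ, ContDiffOn ℝ k F U := by
    intro k
    induction k with
    | zero => exact contDiffOn_zero.2 hdiff.continuousOn
    | succ k ih =>
      have : ((k + 1 : ℕ) : WithTop ℕ∞) = (k : WithTop ℕ∞) + 1 := by norm_cast
      rw [this, contDiffOn_succ_iff_fderiv_of_isOpen hU]
      refine ⟨hdiff, by simp, ?_⟩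
      have h1 : ContDiffOn ℝ k (fun x =>
          (ContinuousLinearMap.mul ℝ M (F x)).comp (ω x)) U :=
        ((ContinuousLinearMap.mul ℝ M).contDiff.comp_contDiffOn ih).clm_comp
          (hω.of_le (WithTop.coe_le_coe.2 (le_top (a := ((k : ℕ∞))))))
      exact h1.congr fun x hx => (hF x hx).fderiv
  exact contDiffOn_infty.2 key

end GlobalFrame

section Concrete

/-- Index of the middle block. -/
def midIdx {m : ℕ} (a : Fin m) : Fin (m + 2) := a.castSucc.succ

theorem sum_idx {m : ℕ} {M : Type*} [AddCommMonoid M] (f : Fin (m + 2) → M) :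
    ∑ i, f i = f 0 + ((∑ a : Fin m, f (midIdx a)) + f (Fin.last (m + 1))) := by
  rw [Fin.sum_univ_succ, Fin.sum_univ_castSucc]
  rfl

theorem idx_cases {m : ℕ} {p : Fin (m + 2) → Prop} (h0 : p 0) (hm : ∀ a, p (midIdx a))
    (hl : p (Fin.last (m + 1))) (i : Fin (m + 2)) : p i := by
  refine Fin.cases h0 (fun j => ?_) i
  exact Fin.lastCases hl hm j

theorem idx_eq {m : ℕ} (i : Fin (m + 2)) :
    i = 0 ∨ (∃ a, i = midIdx a) ∨ i = Fin.last (m + 1) :=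
  idx_cases (p := fun i => i = 0 ∨ (∃ a, i = midIdx a) ∨ i = Fin.last (m + 1))
    (Or.inl rfl) (fun a => Or.inr (Or.inl ⟨a, rfl⟩)) (Or.inr (Or.inr rfl)) i

section entries
variable {m : ℕ} (P : Matrix (Fin m) (Fin m) ℝ) (g h : Fin m → ℝ)

theorem tA_00 : tildeA P g h 0 0 = 0 := by simp [tildeA]
theorem tA_0m (a : Fin m) : tildeA P g h 0 (midIdx a) = -g a := by
  have : (a : ℕ) + 1 ≤ m := a.isLt
  simp [tildeA, midIdx, this]
theorem tA_0l : tildeA P g h 0 (Fin.last (m + 1)) = 0 := by simp [tildeA]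
theorem tA_m0 (a : Fin m) : tildeA P g h (midIdx a) 0 = g a := by
  have : (a : ℕ) ≠ m := a.isLt.ne
  simp [tildeA, midIdx, this]
theorem tA_mm (a b : Fin m) : tildeA P g h (midIdx a) (midIdx b) = P a b := by
  have : (a : ℕ) ≠ m := a.isLt.ne
  have : (b : ℕ) ≠ m := b.isLt.ne
  simp [tildeA, midIdx, *]
theorem tA_ml (a : Fin m) : tildeA P g h (midIdx a) (Fin.last (m + 1)) = -h a := by
  have : (a : ℕ) ≠ m := a.isLt.ne
  simp [tildeA, midIdx, this]
theorem tA_l0 : tildeA P g h (Fin.last (m + 1)) 0 = 0 := by simp [tildeA]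
theorem tA_lm (a : Fin m) : tildeA P g h (Fin.last (m + 1)) (midIdx a) = h a := by
  have : (a : ℕ) + 1 ≤ m := a.isLt
  simp [tildeA, midIdx, this]
theorem tA_ll : tildeA P g h (Fin.last (m + 1)) (Fin.last (m + 1)) = 0 := by simp [tildeA]
end entries

theorem tildeA_skew {m : ℕ} (P : Matrix (Fin m) (Fin m) ℝ) (g h : Fin m → ℝ) (hP : Pᵀ = -P) :
    (tildeA P g h)ᵀ = -(tildeA P g h) := by
  ext i j
  rw [Matrix.transpose_apply, Matrix.neg_apply]
  have hP' : ∀ a b, P b a = -P a b := fun a b => congrFun (congrFun hP a) b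
  rcases idx_eq i with rfl | ⟨a, rfl⟩ | rfl <;> rcases idx_eq j with rfl | ⟨b, rfl⟩ | rfl <;>
    simp only [tA_00, tA_0m, tA_0l, tA_m0, tA_mm, tA_ml, tA_l0, tA_lm, tA_ll, neg_zero, neg_neg]
  exact hP' a b

theorem pd_apply {m N : ℕ} (k : Fin m) (f : (Fin m → ℝ) → (Fin N → ℝ)) (q : Fin m → ℝ)
    (hf : DifferentiableAt ℝ f q) (a : Fin N) : pd k f q a = pdr k (fun x => f x a) q := by
  unfold pd pdr
  rw [fderiv_apply hf]
  rfl

theorem tildeA_flat {m : ℕ} (P : Fin m → (Fin m → ℝ) → Matrix (Fin m) (Fin m) ℝ)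
    (g h : Fin m → (Fin m → ℝ) → (Fin m → ℝ)) (q : Fin m → ℝ)
    (hg : ∀ k, DifferentiableAt ℝ (g k) q) (hh : ∀ k, DifferentiableAt ℝ (h k) q)
    (hskew : ∀ k, (P k q)ᵀ = -(P k q))
    (hcodazzig : ∀ k l,
      pd k (g l) q - pd l (g k) q = P l q *ᵥ g k q - P k q *ᵥ g l q)
    (hcodazzih : ∀ k l,
      pd k (h l) q - pd l (h k) q = P l q *ᵥ h k q - P k q *ᵥ h l q)
    (hcompat : ∀ k l, g k q ⬝ᵥ h l q = g l q ⬝ᵥ h k q)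
    (hgauss : ∀ k l,
      pdM k (P l) q - pdM l (P k) q
        = P l q * P k q - P k q * P l q
          + (Matrix.vecMulVec (g k q) (g l q) - Matrix.vecMulVec (g l q) (g k q))
          + (Matrix.vecMulVec (h k q) (h l q) - Matrix.vecMulVec (h l q) (h k q)))
    (k l : Fin m) :
    pdM k (fun x => tildeA (P l x) (g l x) (h l x)) q
      - pdM l (fun x => tildeA (P k x) (g k x) (h k x)) q
      = tildeA (P l q) (g l q) (h l q) * tildeA (P k q) (g k q) (h k q)
        - tildeA (P k q) (g k q) (h k q) * tildeA (P l q) (g l q) (h l q) := by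
  have hP' : ∀ k a b, P k q b a = -P k q a b := fun k a b => congrFun (congrFun (hskew k) a) b
  have hneg : ∀ (k : Fin m) (f : (Fin m → ℝ) → ℝ), pdr k (fun x => -f x) q = -pdr k f q := by
    intro k f
    simp [pdr, fderiv_fun_neg]
  have h0 : ∀ (k : Fin m), pdr k (fun _ => (0 : ℝ)) q = 0 := by
    intro k
    simp [pdr]
  have hG : ∀ a, pdr k (fun x => g l x a) q - pdr l (fun x => g k x a) q
      = ∑ b, P l q a b * g k q b - ∑ b, P k q a b * g l q b := by
    intro a
    have := congrFun (hcodazzig k l) a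
    simpa [pd_apply _ _ _ (hg _), Matrix.mulVec, dotProduct] using this
  have hH : ∀ a, pdr k (fun x => h l x a) q - pdr l (fun x => h k x a) q
      = ∑ b, P l q a b * h k q b - ∑ b, P k q a b * h l q b := by
    intro a
    have := congrFun (hcodazzih k l) a
    simpa [pd_apply _ _ _ (hh _), Matrix.mulVec, dotProduct] using this
  have hGa : ∀ a b, pdr k (fun x => P l x a b) q - pdr l (fun x => P k x a b) q
      = ∑ c, P l q a c * P k q c b - ∑ c, P k q a c * P l q c b
        + (g k q a * g l q b - g l q a * g k q b) + (h k q a * h l q b - h l q a * h k q b) := by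
    intro a b
    have := congrFun (congrFun (hgauss k l) a) b
    simpa [pdM, Matrix.mul_apply, Matrix.vecMulVec_apply] using this
  have hc : ∑ a, g k q a * h l q a = ∑ a, g l q a * h k q a := hcompat k l
  have hc' : ∑ a, h k q a * g l q a = ∑ a, h l q a * g k q a := by
    simpa only [mul_comm] using hc.symm
  have hcg : ∑ a, g k q a * g l q a = ∑ a, g l q a * g k q a := by simp only [mul_comm]
  have hch : ∑ a, h k q a * h l q a = ∑ a, h l q a * h k q a := by simp only [mul_comm]
  have hsw : ∀ (k : Fin m) (v : Fin m → ℝ) b, ∑ a, v a * P k q a b = - ∑ a, P k q b a * v a := by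
    intro k v b
    rw [← Finset.sum_neg_distrib]
    refine Finset.sum_congr rfl fun a _ => ?_
    rw [hP' k b a]; ring
  ext i j
  simp only [Matrix.sub_apply, Matrix.mul_apply, sum_idx, pdM, Matrix.of_apply]
  rcases idx_eq i with rfl | ⟨a, rfl⟩ | rfl <;> rcases idx_eq j with rfl | ⟨b, rfl⟩ | rfl <;>
    simp only [tA_00, tA_0m, tA_0l, tA_m0, tA_mm, tA_ml, tA_l0, tA_lm, tA_ll, hneg, h0,
      mul_zero, zero_mul, add_zero, zero_add, neg_mul, mul_neg, neg_neg,
      Finset.sum_neg_distrib, hsw]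
  · linarith
  · linarith [hG b]
  · linarith
  · linarith [hG a]
  · have := hGa a b
    simp only [hsw] at this
    linarith
  · linarith [hH a]
  · linarith
  · linarith [hH b]
  · linarith

/-- Real square matrices with a normed algebra structure. -/
def NMat (n : ℕ) : Type := Matrix (Fin n) (Fin n) ℝ

instance instNRNMat (n : ℕ) : NormedRing (NMat n) := Matrix.linftyOpNormedRing (n := Fin n) (α := ℝ)

instance instNANMat (n : ℕ) : NormedAlgebra ℝ (NMat n) :=
  Matrix.linftyOpNormedAlgebra (n := Fin n) (α := ℝ) (R := ℝ)

/-- Linear identification. -/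
def toNMat (n : ℕ) : Matrix (Fin n) (Fin n) ℝ ≃ₗ[ℝ] NMat n where
  toFun A := A
  invFun A := A
  map_add' _ _ := rfl
  map_smul' _ _ := rfl
  left_inv _ := rfl
  right_inv _ := rfl

instance instFDNMat (n : ℕ) : FiniteDimensional ℝ (NMat n) :=
  LinearEquiv.finiteDimensional (toNMat n)

instance instCSNMat (n : ℕ) : CompleteSpace (NMat n) := FiniteDimensional.complete ℝ _

theorem toNMat_mul {n : ℕ} (A B : Matrix (Fin n) (Fin n) ℝ) :
    toNMat n (A * B) = toNMat n A * toNMat n B := rfl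

theorem toNMat_one {n : ℕ} : toNMat n 1 = 1 := rfl

instance instDFNMat (n : ℕ) : IsDedekindFiniteMonoid (NMat n) where
  mul_eq_one_symm := fun {a b} h => by
    have h' : (toNMat n).symm a * (toNMat n).symm b = 1 := h
    have h2 : (toNMat n).symm b * (toNMat n).symm a = 1 := mul_eq_one_comm.1 h'
    exact h2

/-- Transposition. -/
def trN (n : ℕ) : NMat n →L[ℝ] NMat n :=
  LinearMap.toContinuousLinearMap ((toNMat n).toLinearMap ∘ₗ
    (Matrix.transposeLinearEquiv (Fin n) (Fin n) ℝ ℝ).toLinearMap ∘ₗ (toNMat n).symm.toLinearMap)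

theorem trN_apply {n : ℕ} (A : Matrix (Fin n) (Fin n) ℝ) : trN n (toNMat n A) = toNMat n Aᵀ := rfl

/-- Entry functional. -/
def entN (n : ℕ) (i j : Fin n) : NMat n →L[ℝ] ℝ :=
  LinearMap.toContinuousLinearMap
    ((Matrix.entryLinearMap ℝ ℝ i j) ∘ₗ (toNMat n).symm.toLinearMap)

theorem entN_apply {n : ℕ} (i j : Fin n) (A : Matrix (Fin n) (Fin n) ℝ) :
    entN n i j (toNMat n A) = A i j := rfl

theorem NMat_ext {n : ℕ} {A B : NMat n} (h : ∀ i j, entN n i j A = entN n i j B) : A = B :=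
  Matrix.ext (m := Fin n) (n := Fin n) h

theorem contDiffOn_toNMat {E : Type*} [NormedAddCommGroup E] [NormedSpace ℝ E] {n : ℕ}
    {U : Set E} {A : E → Matrix (Fin n) (Fin n) ℝ} {d : WithTop ℕ∞}
    (hA : ∀ i j, ContDiffOn ℝ d (fun q => A q i j) U) :
    ContDiffOn ℝ d (fun q => toNMat n (A q)) U := by
  have : (fun q => toNMat n (A q))
      = fun q => ∑ i, ∑ j, A q i j • toNMat n (Matrix.single i j 1) := by
    funext q
    conv_lhs => rw [Matrix.matrix_eq_sum_single (A q)]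
    simp only [map_sum, ← map_smul, Matrix.smul_single, smul_eq_mul, mul_one]
  rw [this]
  exact ContDiffOn.sum fun i _ => ContDiffOn.sum fun j _ => (hA i j).smul contDiffOn_const

theorem frame_abstract {m : ℕ} {M : Type*} [NormedRing M] [NormedAlgebra ℝ M] [CompleteSpace M]
    [IsDedekindFiniteMonoid M]
    (T : M →L[ℝ] M) (hT : ∀ a b, T (a * b) = T b * T a) (hT1 : T 1 = 1)
    (U : Set (Fin m → ℝ)) (hU : IsOpen U)
    (hconn : IsConnected U) (hsc : SimplyConnectedSpace U)
    (B : Fin m → (Fin m → ℝ) → M)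
    (hB : ∀ k, ContDiffOn ℝ (⊤ : ℕ∞) (B k) U)
    (hBskew : ∀ k, ∀ q ∈ U, T (B k q) = -(B k q))
    (hBflat : ∀ k l, ∀ q ∈ U, fderiv ℝ (B l) q (Pi.single k 1) - fderiv ℝ (B k) q (Pi.single l 1)
      = B l q * B k q - B k q * B l q)
    (p₀ : Fin m → ℝ) (hp₀ : p₀ ∈ U) :
    ∃ G : (Fin m → ℝ) → M, G p₀ = 1 ∧ ContDiffOn ℝ (⊤ : ℕ∞) G U ∧
      (∀ q ∈ U, G q * T (G q) = 1) ∧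
      (∀ q ∈ U, DifferentiableAt ℝ G q) ∧
      (∀ k, ∀ q ∈ U, fderiv ℝ G q (Pi.single k 1) = G q * B k q) := by
  let L : Fin m → M →L[ℝ] ((Fin m → ℝ) →L[ℝ] M) := fun k =>
    ContinuousLinearMap.smulRightL ℝ (Fin m → ℝ) (M)
      (ContinuousLinearMap.proj (R := ℝ) (φ := fun _ : Fin m => ℝ) k)
  have hL : ∀ k X u, L k X u = u k • X := fun k X u => rfl
  let ω : (Fin m → ℝ) → (Fin m → ℝ) →L[ℝ] M := fun q => ∑ k, L k (B k q)
  have hωa : ∀ q u, ω q u = ∑ k, u k • B k q := by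
    intro q u
    simp only [ω, _root_.sum_apply, hL]
  have hω : ContDiffOn ℝ (⊤ : ℕ∞) ω U :=
    ContDiffOn.sum fun k _ => (L k).contDiff.comp_contDiffOn (hB k)
  have hBd : ∀ k, ∀ q ∈ U, DifferentiableAt ℝ (B k) q := fun k q hq =>
    ((hB k).contDiffAt (hU.mem_nhds hq)).differentiableAt (by simp)
  have hωd : ∀ q ∈ U, ∀ u v, fderiv ℝ ω q u v
      = ∑ k, ∑ l, (u k * v l) • fderiv ℝ (B l) q (Pi.single k 1) := by
    intro q hq u v
    have h1 : HasFDerivAt ω (∑ l, (L l).comp (fderiv ℝ (B l) q)) q :=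
      HasFDerivAt.fun_sum fun l _ => (L l).hasFDerivAt.comp q (hBd l q hq).hasFDerivAt
    rw [h1.fderiv]
    have hu : u = ∑ k, u k • (Pi.single k (1:ℝ) : Fin m → ℝ) := by
      ext i; simp [Finset.sum_apply, Pi.single_apply]
    simp only [_root_.sum_apply, ContinuousLinearMap.comp_apply, hL]
    rw [Finset.sum_comm]
    refine Finset.sum_congr rfl fun l _ => ?_
    conv_lhs => rw [hu]
    rw [map_sum, Finset.smul_sum]
    refine Finset.sum_congr rfl fun k _ => ?_
    rw [map_smul, smul_smul, mul_comm]
  have hωflat : ∀ y ∈ U, ∀ u v,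
      fderiv ℝ ω y u v - fderiv ℝ ω y v u = ω y v * ω y u - ω y u * ω y v := by
    intro q hq u v
    rw [hωd q hq, hωd q hq, hωa, hωa]
    rw [Finset.sum_mul_sum, Finset.sum_mul_sum]
    rw [Finset.sum_comm (f := fun k l => (v k * u l) • fderiv ℝ (B l) q (Pi.single k 1)),
      Finset.sum_comm (f := fun k l => v k • B k q * u l • B l q), ← Finset.sum_sub_distrib,
      ← Finset.sum_sub_distrib]
    refine Finset.sum_congr rfl fun k _ => ?_
    rw [← Finset.sum_sub_distrib, ← Finset.sum_sub_distrib]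
    refine Finset.sum_congr rfl fun l _ => ?_
    rw [mul_comm (v l) (u k), ← smul_sub, hBflat k l q hq]
    simp only [smul_mul_assoc, mul_smul_comm, smul_smul, smul_sub, mul_comm]
  have hωskew : ∀ y ∈ U, ∀ u, T (ω y u) = -(ω y u) := by
    intro q hq u
    rw [hωa, map_sum, ← Finset.sum_neg_distrib]
    refine Finset.sum_congr rfl fun k _ => ?_
    rw [map_smul, ← smul_neg, hBskew k q hq]
  obtain ⟨G, hG1, hGs, hGo⟩ := global_frame T hT hT1 U hU hconn hsc ω hω hωflat hωskew p₀ hp₀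
  refine ⟨G, hG1, solves_contDiffOn U hU ω hω G hGs, hGo,
    fun q hq => (hGs q hq).differentiableAt, fun k q hq => ?_⟩
  have h3 : ω q (Pi.single k 1) = B k q := by
    rw [hωa]; simp [Pi.single_apply]
  rw [(hGs q hq).fderiv, ContinuousLinearMap.comp_apply, h3]
  rfl

theorem frame_exists {m n : ℕ} (U : Set (Fin m → ℝ)) (hU : IsOpen U)
    (hconn : IsConnected U) (hsc : SimplyConnectedSpace U)
    (A : Fin m → (Fin m → ℝ) → Matrix (Fin n) (Fin n) ℝ)
    (hA : ∀ k i j, ContDiffOn ℝ (⊤ : ℕ∞) (fun q => A k q i j) U)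
    (hskew : ∀ k, ∀ q ∈ U, (A k q)ᵀ = -(A k q))
    (hflat : ∀ k l, ∀ q ∈ U, pdM k (A l) q - pdM l (A k) q = A l q * A k q - A k q * A l q) :
    ∃ F : (Fin m → ℝ) → Matrix (Fin n) (Fin n) ℝ,
      (∀ i j, ContDiffOn ℝ (⊤ : ℕ∞) (fun q => F q i j) U) ∧
      (∀ q ∈ U, (F q)ᵀ * F q = 1 ∧ (F q).det = 1) ∧
      (∀ k, ∀ q ∈ U, pdM k F q = F q * A k q) := by
  let B : Fin m → (Fin m → ℝ) → NMat n := fun k q => toNMat n (A k q)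
  have hB : ∀ k, ContDiffOn ℝ (⊤ : ℕ∞) (B k) U := fun k => contDiffOn_toNMat (hA k)
  have hBd : ∀ k, ∀ q ∈ U, DifferentiableAt ℝ (B k) q := fun k q hq =>
    ((hB k).contDiffAt (hU.mem_nhds hq)).differentiableAt (by simp)
  have hent : ∀ (G : (Fin m → ℝ) → NMat n) q, DifferentiableAt ℝ G q → ∀ i j u,
      entN n i j (fderiv ℝ G q u) = fderiv ℝ (fun x => entN n i j (G x)) q u := by
    intro G q hG i j u
    have := ((entN n i j).hasFDerivAt.comp q hG.hasFDerivAt).fderiv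
    exact (congrArg (fun T => T u) this).symm
  have hDB : ∀ k l, ∀ q ∈ U, fderiv ℝ (B l) q (Pi.single k 1) = toNMat n (pdM k (A l) q) := by
    intro k l q hq
    apply NMat_ext
    intro i j
    rw [hent _ _ (hBd l q hq), entN_apply]
    rfl
  have hBflat : ∀ k l, ∀ q ∈ U, fderiv ℝ (B l) q (Pi.single k 1) - fderiv ℝ (B k) q (Pi.single l 1)
      = B l q * B k q - B k q * B l q := by
    intro k l q hq
    rw [hDB k l q hq, hDB l k q hq, ← map_sub, hflat k l q hq]
    rfl
  obtain ⟨p₀, hp₀⟩ := hconn.nonempty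
  obtain ⟨G, hG1, hGc, hGo, hGd, hGs⟩ := frame_abstract (trN n)
    (fun a b => by
      exact Matrix.transpose_mul ((toNMat n).symm a) ((toNMat n).symm b))
    (by rw [← toNMat_one, trN_apply, Matrix.transpose_one])
    U hU hconn hsc B hB
    (by
      intro k q hq
      show trN n (toNMat n (A k q)) = - toNMat n (A k q)
      rw [trN_apply, hskew k q hq, map_neg]) hBflat p₀ hp₀
  let F : (Fin m → ℝ) → Matrix (Fin n) (Fin n) ℝ := fun q => (toNMat n).symm (G q)
  have hFc : ∀ i j, ContDiffOn ℝ (⊤ : ℕ∞) (fun q => F q i j) U := fun i j =>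
    (entN n i j).contDiff.comp_contDiffOn hGc
  have hFo : ∀ q ∈ U, F q * (F q)ᵀ = 1 := fun q hq => hGo q hq
  refine ⟨F, hFc, ?_, ?_⟩
  · have hcont : ContinuousOn (fun q => (F q).det) U := by
      have : ContinuousOn F U :=
        continuousOn_pi.2 fun i => continuousOn_pi.2 fun j => (hFc i j).continuousOn
      exact Continuous.comp_continuousOn (continuous_id.matrix_det) this
    have hsq : Set.EqOn ((fun q => (F q).det) ^ 2) ((fun _ => (1:ℝ)) ^ 2) U := by
      intro q hq
      have := congrArg Matrix.det (hFo q hq)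
      rw [Matrix.det_mul, Matrix.det_transpose, Matrix.det_one] at this
      simpa [sq] using this
    have hF1 : F p₀ = 1 := hG1
    intro q hq
    refine ⟨mul_eq_one_comm.1 (hFo q hq), ?_⟩
    rcases hconn.isPreconnected.eq_or_eq_neg_of_sq_eq hcont continuousOn_const hsq
      (fun _ => one_ne_zero) with h | h
    · exact h hq
    · have := h hp₀
      simp only [hF1, Matrix.det_one, Pi.neg_apply] at this
      norm_num at this
  · intro k q hq
    ext i j
    have h1 := hent G q (hGd q hq) i j (Pi.single k 1)
    rw [hGs k q hq] at h1
    exact h1.symm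

end Concrete

/-- Realization of frontal bundles in the spherical case `c = 1`:
a frontal bundle over a simply connected domain, given in an adapted orthonormal frame by
connection matrices `P_k` and homomorphism components `g_k, h_k` satisfying the coherence,
compatibility and Gauss (`c = 1`) equations, is realized by a frontal `(f, ν)` in
`S^{m+1} ⊂ ℝ^{m+2}`, where `f` is column `0` and `ν` is column `m+1` of the adapted frame. -/
theorem realization_frontal_bundle_sphere {m : ℕ}
    (U : Set (Fin m → ℝ)) (hU : IsOpen U)
    (hconn : IsConnected U) (hsc : SimplyConnectedSpace U)
    (P : Fin m → (Fin m → ℝ) → Matrix (Fin m) (Fin m) ℝ)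
    (g h : Fin m → (Fin m → ℝ) → (Fin m → ℝ))
    (hP : ∀ k i j, ContDiffOn ℝ (⊤ : ℕ∞) (fun q => P k q i j) U)
    (hg : ∀ k, ContDiffOn ℝ (⊤ : ℕ∞) (g k) U) (hh : ∀ k, ContDiffOn ℝ (⊤ : ℕ∞) (h k) U)
    (hskew : ∀ k, ∀ q ∈ U, (P k q)ᵀ = -(P k q))
    (hcodazzig : ∀ k l, ∀ q ∈ U,
      pd k (g l) q - pd l (g k) q = P l q *ᵥ g k q - P k q *ᵥ g l q)
    (hcodazzih : ∀ k l, ∀ q ∈ U,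
      pd k (h l) q - pd l (h k) q = P l q *ᵥ h k q - P k q *ᵥ h l q)
    (hcompat : ∀ k l, ∀ q ∈ U, g k q ⬝ᵥ h l q = g l q ⬝ᵥ h k q)
    (hgauss : ∀ k l, ∀ q ∈ U,
      pdM k (P l) q - pdM l (P k) q
        = P l q * P k q - P k q * P l q
          + (Matrix.vecMulVec (g k q) (g l q) - Matrix.vecMulVec (g l q) (g k q))
          + (Matrix.vecMulVec (h k q) (h l q) - Matrix.vecMulVec (h l q) (h k q))) :
    ∃ F : (Fin m → ℝ) → Matrix (Fin (m + 2)) (Fin (m + 2)) ℝ,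
      (∀ i j, ContDiffOn ℝ (⊤ : ℕ∞) (fun q => F q i j) U) ∧
      (∀ q ∈ U, (F q)ᵀ * F q = 1 ∧ (F q).det = 1) ∧
      (∀ k, ∀ q ∈ U, pdM k F q = F q * tildeA (P k q) (g k q) (h k q)) ∧
      (∀ f ν : (Fin m → ℝ) → (Fin (m + 2) → ℝ),
        (∀ q, f q = fun i => F q i 0) →
        (∀ q, ν q = fun i => F q i (Fin.last (m + 1))) →
        (∀ q ∈ U, f q ⬝ᵥ f q = 1 ∧ ν q ⬝ᵥ ν q = 1 ∧ f q ⬝ᵥ ν q = 0) ∧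
        (∀ k, ∀ q ∈ U, pd k f q ⬝ᵥ ν q = 0) ∧
        (∀ k l, ∀ q ∈ U, pd k f q ⬝ᵥ pd l f q = g k q ⬝ᵥ g l q) ∧
        (∀ k l, ∀ q ∈ U, pd k f q ⬝ᵥ pd l ν q = -(g k q ⬝ᵥ h l q)) ∧
        (∀ k l, ∀ q ∈ U, pd k ν q ⬝ᵥ pd l ν q = h k q ⬝ᵥ h l q)) := by
  have hdg : ∀ k, ∀ q ∈ U, DifferentiableAt ℝ (g k) q := fun k q hq =>
    ((hg k).contDiffAt (hU.mem_nhds hq)).differentiableAt (by simp)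
  have hdh : ∀ k, ∀ q ∈ U, DifferentiableAt ℝ (h k) q := fun k q hq =>
    ((hh k).contDiffAt (hU.mem_nhds hq)).differentiableAt (by simp)
  have hgc : ∀ k a, ContDiffOn ℝ (⊤ : ℕ∞) (fun q => g k q a) U := fun k a =>
    contDiffOn_pi.1 (hg k) a
  have hhc : ∀ k a, ContDiffOn ℝ (⊤ : ℕ∞) (fun q => h k q a) U := fun k a =>
    contDiffOn_pi.1 (hh k) a
  obtain ⟨F, hFc, hFo, hFd⟩ := frame_exists U hU hconn hsc
    (fun k q => tildeA (P k q) (g k q) (h k q))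
    (by
      intro k i j
      rcases idx_eq i with rfl | ⟨a, rfl⟩ | rfl <;> rcases idx_eq j with rfl | ⟨b, rfl⟩ | rfl <;>
        simp only [tA_00, tA_0m, tA_0l, tA_m0, tA_mm, tA_ml, tA_l0, tA_lm, tA_ll]
      · exact contDiffOn_const
      · exact (hgc k b).neg
      · exact contDiffOn_const
      · exact hgc k a
      · exact hP k a b
      · exact (hhc k a).neg
      · exact contDiffOn_const
      · exact hhc k b
      · exact contDiffOn_const)
    (fun k q hq => tildeA_skew _ _ _ (hskew k q hq))
    (fun k l q hq => tildeA_flat P g h q (fun k => hdg k q hq) (fun k => hdh k q hq)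
      (fun k => hskew k q hq) (fun k l => hcodazzig k l q hq) (fun k l => hcodazzih k l q hq)
      (fun k l => hcompat k l q hq) (fun k l => hgauss k l q hq) k l)
  refine ⟨F, hFc, hFo, hFd, ?_⟩
  intro f ν hf hν
  obtain rfl : f = fun q i => F q i 0 := funext hf
  obtain rfl : ν = fun q i => F q i (Fin.last (m + 1)) := funext hν
  have hpd : ∀ k, ∀ q ∈ U, ∀ j, pd k (fun q i => F q i j) q
      = fun i => (F q * tildeA (P k q) (g k q) (h k q)) i j := by
    intro k q hq j
    have hd : DifferentiableAt ℝ (fun q i => F q i j) q :=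
      differentiableAt_pi.2 fun i =>
        ((hFc i j).contDiffAt (hU.mem_nhds hq)).differentiableAt (by simp)
    funext i
    rw [pd_apply _ _ _ hd, ← hFd k q hq]
    rfl
  have hdot : ∀ q ∈ U, ∀ (A B : Matrix (Fin (m + 2)) (Fin (m + 2)) ℝ) i j,
      (fun s => (F q * A) s i) ⬝ᵥ (fun s => (F q * B) s j) = (Aᵀ * B) i j := by
    intro q hq A B i j
    have : Aᵀ * B = (F q * A)ᵀ * (F q * B) := by
      rw [Matrix.transpose_mul, Matrix.mul_assoc, ← Matrix.mul_assoc (F q)ᵀ, (hFo q hq).1,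
        Matrix.one_mul]
    rw [this]
    rfl
  have hne : (0 : Fin (m + 2)) ≠ Fin.last (m + 1) := by simp [Fin.ext_iff]
  refine ⟨fun q hq => ⟨?_, ?_, ?_⟩, fun k q hq => ?_, fun k l q hq => ?_, fun k l q hq => ?_,
    fun k l q hq => ?_⟩
  · simpa using hdot q hq 1 1 0 0
  · simpa using hdot q hq 1 1 (Fin.last (m + 1)) (Fin.last (m + 1))
  · simpa [hne] using hdot q hq 1 1 0 (Fin.last (m + 1))
  · rw [hpd k q hq]
    have := hdot q hq (tildeA (P k q) (g k q) (h k q)) 1 0 (Fin.last (m + 1))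
    rw [Matrix.mul_one, Matrix.mul_one, Matrix.transpose_apply, tA_l0] at this
    exact this
  · rw [hpd k q hq, hpd l q hq, hdot q hq, Matrix.mul_apply, sum_idx]
    simp [Matrix.transpose_apply, tA_00, tA_m0, tA_l0, dotProduct]
  · rw [hpd k q hq, hpd l q hq, hdot q hq, Matrix.mul_apply, sum_idx]
    simp [Matrix.transpose_apply, tA_00, tA_m0, tA_l0, tA_0l, tA_ml, tA_ll, dotProduct]
  · rw [hpd k q hq, hpd l q hq, hdot q hq, Matrix.mul_apply, sum_idx]
    simp [Matrix.transpose_apply, tA_0l, tA_ml, tA_ll, dotProduct]
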